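/- arXiv:1101.5321 — 2 statements merged into one kernel-verified Lean document; each statement's English description precedes it below -/
import Mathlib

section
/- For every integer n ≥ 3 and every r with 3 ≤ r ≤ n, per((J_n − I − P)[1|r]) = Σ_{k=0}^{n−1} (−1)^k · (n−k−1)! · Σ_{i=max(r+k−n−1, 0)}^{min(k, r−2)} C(2r−i−4, i) · C(2(n−r)−k+i+2, k−i). (This is the solution of the ménage problem in which one fixed husband has already been seated on the chair at distance r−1, measured clockwise, from his wife.) -/
open Finset

/-- The `m × m` all-ones matrix `J_m` (integer entries). -/
def Jmat (m : ℕ) : Matrix (Fin m) (Fin m) ℤ := Matrix.of fun _ _ => 1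

/-- The `m × m` permutation matrix `P` of the cycle `(1,2,...,m)`: entry `1` exactly at the
positions `(i, i+1 mod m)`, and `0` elsewhere. -/
def Pmat (m : ℕ) : Matrix (Fin m) (Fin m) ℤ :=
  Matrix.of fun i j => if j.1 = (i.1 + 1) % m then 1 else 0

/-- The order-preserving embedding of `Fin (m-1)` into `Fin m` that skips index `a`. -/
def skipIdx {m : ℕ} (a : ℕ) (i : Fin (m - 1)) : Fin m :=
  if i.1 < a then ⟨i.1, by have := i.isLt; omega⟩ else ⟨i.1 + 1, by have := i.isLt; omega⟩

/-- The matrix obtained from the `m × m` matrix `M` by deleting row `a` and column `b`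
(`0`-based indices; the paper's `M[1|r]`, deleting row `1` and column `r` in `1`-based
indexing, is `delRC M 0 (r-1)`). -/
def delRC {m : ℕ} (M : Matrix (Fin m) (Fin m) ℤ) (a b : ℕ) :
    Matrix (Fin (m - 1)) (Fin (m - 1)) ℤ :=
  Matrix.of fun i j => M (skipIdx a i) (skipIdx b j)

/-- `rookNum M j` is the number of ways to place `j` non-attacking rooks on the `1`-entries
of the matrix `M`: the number of `j`-element sets of positions carrying entry `1`, no two of
which share a row or a column.  In particular `rookNum M 0 = 1`. -/
def rookNum {α β : Type*} [Fintype α] [Fintype β] [DecidableEq α] [DecidableEq β]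
    (M : Matrix α β ℤ) (j : ℕ) : ℕ :=
  ((Finset.powersetCard j (Finset.univ : Finset (α × β))).filter fun S =>
    ∀ p ∈ S, M p.1 p.2 = 1 ∧ ∀ q ∈ S, p ≠ q → p.1 ≠ q.1 ∧ p.2 ≠ q.2).card

/-- The binomial coefficient `C(a,b)` for integer arguments, with the convention that it
vanishes unless `0 ≤ b ≤ a`. -/
def intChoose (a b : ℤ) : ℤ :=
  if 0 ≤ b ∧ b ≤ a then (a.toNat.choose b.toNat : ℤ) else 0

/-!
Expanding the permanent of `J - A` over the cells of a `0`-`1` matrix `A` gives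
`∑ k, (-1) ^ k * (N - k)! * r_k`, where `r_k` is the `k`-th rook number of `A`. The ones of `I + P`
form a cycle of `2 * n` cells in which two cells lie in a common row or column exactly when they are
neighbours. Deleting a row and a column removes two neighbouring pairs from the cycle and leaves two
disjoint paths, so a rook placement is a choice of pairwise non-adjacent vertices on each path.
Kaplansky's lemma counts these by binomial coefficients.
-/

open scoped Nat

section RookTheory

variable {α β : Type*}

/-- Rooks on the cells of `S` do not attack each other: `S` meets every row and every column at
most once. -/
def IsNonattacking (S : Finset (α × β)) : Prop :=
  Set.InjOn Prod.fst (S : Set (α × β)) ∧ Set.InjOn Prod.snd (S : Set (α × β))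

lemma isNonattacking_iff {S : Finset (α × β)} :
    IsNonattacking S ↔ ∀ p ∈ S, ∀ q ∈ S, p ≠ q → p.1 ≠ q.1 ∧ p.2 ≠ q.2 := by
  simp only [IsNonattacking, Set.InjOn, mem_coe]
  grind

/-- The board of a matrix: the set of its cells carrying the entry `1`. -/
def board [Fintype α] [Fintype β] (M : Matrix α β ℤ) : Finset (α × β) :=
  {p | M p.1 p.2 = 1}

lemma mem_board [Fintype α] [Fintype β] {M : Matrix α β ℤ} {p : α × β} :
    p ∈ board M ↔ M p.1 p.2 = 1 := by
  simp [board]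

open Classical in
lemma rookNum_eq_card_filter_board [Fintype α] [Fintype β] [DecidableEq α] [DecidableEq β]
    (M : Matrix α β ℤ) (k : ℕ) :
    rookNum M k = #{S ∈ (board M).powersetCard k | IsNonattacking S} := by
  unfold rookNum
  congr! 1
  ext S
  simp only [mem_filter, mem_powersetCard, isNonattacking_iff, subset_iff, mem_univ, mem_board]
  grind

lemma card_perm_forall_apply_eq [Fintype α] [DecidableEq α] {ι : Type*} (S : Finset ι)
    {f g : ι → α} (hf : Set.InjOn f S) (hg : Set.InjOn g S) :
    #{σ : Equiv.Perm α | ∀ x ∈ S, σ (f x) = g x} = (Fintype.card α - #S)! := by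
  classical
  let e : f '' S ≃ g '' S :=
    (Equiv.Set.imageOfInjOn f S hf).symm.trans (Equiv.Set.imageOfInjOn g S hg)
  have he (x : ι) (hx : x ∈ S) : (e ⟨f x, x, hx, rfl⟩ : α) = g x := by
    have : (Equiv.Set.imageOfInjOn f S hf).symm ⟨f x, x, hx, rfl⟩ = ⟨x, hx⟩ :=
      (Equiv.symm_apply_eq _).2 rfl
    simp only [e, Equiv.trans_apply, this]
    rfl
  have hcard (h : ι → α) (hh : Set.InjOn h S) :
      Fintype.card ((h '' S)ᶜ : Set α) = Fintype.card α - #S := by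
    rw [Fintype.card_compl_set, Set.card_image_of_inj_on hh]
    simp
  calc #{σ : Equiv.Perm α | ∀ x ∈ S, σ (f x) = g x}
      = Fintype.card {σ : α ≃ α // ∀ a : f '' S, σ a = e a} := by
        rw [Fintype.card_subtype]
        congr! 2 with σ
        refine ⟨?_, fun h x hx => (h ⟨f x, x, hx, rfl⟩).trans (he x hx)⟩
        rintro h ⟨_, x, hx, rfl⟩
        rw [h x hx, he x hx]
    _ = Fintype.card (((f '' S)ᶜ : Set α) ≃ ((g '' S)ᶜ : Set α)) :=
        Fintype.card_congr (Equiv.Set.compl e)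
    _ = (Fintype.card α - #S)! := by
        rw [Fintype.card_equiv (Fintype.equivOfCardEq ((hcard f hf).trans (hcard g hg).symm)),
          hcard f hf]

lemma isNonattacking_of_perm {S : Finset (α × α)} {σ : Equiv.Perm α}
    (h : ∀ p ∈ S, σ p.2 = p.1) : IsNonattacking S :=
  ⟨fun p hp q hq hpq => Prod.ext hpq (σ.injective (by rw [h p hp, h q hq, hpq])),
    fun p hp q hq hpq => Prod.ext (by rw [← h p hp, ← h q hq, hpq]) hpq⟩

lemma IsNonattacking.card_le [Fintype α] {S : Finset (α × β)} (h : IsNonattacking S) :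
    #S ≤ Fintype.card α :=
  card_le_card_of_injOn Prod.fst (fun _ _ => mem_univ _) h.1

lemma prod_one_sub_apply_perm [Fintype α] [DecidableEq α] {A : Matrix α α ℤ}
    (hA : ∀ i j, A i j = 0 ∨ A i j = 1) (σ : Equiv.Perm α) :
    ∏ i, (1 - A (σ i) i) = ∏ p ∈ board A, (1 + if σ p.2 = p.1 then -1 else 0) := by
  rw [board, prod_filter, ← univ_product_univ, prod_product_right]
  refine prod_congr rfl fun i _ => ?_
  rw [prod_eq_single (σ i) (by intros; simp_all [eq_comm]) (by simp)]
  rcases hA (σ i) i with h | h <;> simp [h]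

open Classical in
/-- Inclusion–exclusion over the permutations through a nonattacking set of cells. -/
theorem permanent_ones_sub_eq_sum_rookNum [Fintype α] [DecidableEq α]
    {A : Matrix α α ℤ} (hA : ∀ i j, A i j = 0 ∨ A i j = 1) :
    (Matrix.of (fun _ _ => 1) - A).permanent =
      ∑ k ∈ range (Fintype.card α + 1),
        (-1 : ℤ) ^ k * ((Fintype.card α - k)! : ℤ) * rookNum A k := by
  have hperm (S : Finset (α × α)) :
      ∑ σ : Equiv.Perm α, ∏ p ∈ S, (if σ p.2 = p.1 then (-1 : ℤ) else 0) =
        if IsNonattacking S then (-1) ^ #S * ((Fintype.card α - #S)! : ℤ) else 0 := by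
    simp only [prod_ite_zero, prod_const]
    rw [← sum_filter, sum_const, nsmul_eq_mul, mul_comm]
    split_ifs with hS
    · rw [← card_perm_forall_apply_eq S hS.2 hS.1]
      congr!
    · rw [filter_false_of_mem fun σ _ h => hS (isNonattacking_of_perm h), card_empty,
        Nat.cast_zero, mul_zero]
  calc (Matrix.of (fun _ _ => 1) - A).permanent
      = ∑ σ : Equiv.Perm α, ∏ i, (1 - A (σ i) i) := rfl
    _ = ∑ S ∈ (board A).powerset, ∑ σ : Equiv.Perm α,
          ∏ p ∈ S, (if σ p.2 = p.1 then (-1 : ℤ) else 0) := by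
        simp only [prod_one_sub_apply_perm hA, prod_one_add]
        exact sum_comm
    _ = ∑ S ∈ (board A).powerset with IsNonattacking S,
          (-1) ^ #S * ((Fintype.card α - #S)! : ℤ) := by
        simp only [hperm, sum_filter]
    _ = ∑ k ∈ range (Fintype.card α + 1),
          (-1 : ℤ) ^ k * ((Fintype.card α - k)! : ℤ) * rookNum A k := by
        rw [← sum_fiberwise_of_maps_to (g := card) (t := range (Fintype.card α + 1))
          fun S hS => mem_range_succ_iff.2 (mem_filter.1 hS).2.card_le]
        refine sum_congr rfl fun k _ => ?_
        rw [sum_congr rfl fun S hS => by rw [(mem_filter.1 hS).2], sum_const, nsmul_eq_mul,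
          mul_comm, rookNum_eq_card_filter_board, filter_comm,
          powersetCard_eq_filter]

end RookTheory

section SparseSets

/-- A set of natural numbers is sparse if it contains no two consecutive numbers. -/
def IsSparse (S : Finset ℕ) : Prop := ∀ p ∈ S, p + 1 ∉ S

lemma isSparse_insert {S : Finset ℕ} {x : ℕ} (hx : x + 1 ∉ S) :
    IsSparse (insert x S) ↔ IsSparse S ∧ ∀ v ∈ S, v + 1 ≠ x := by
  simp only [IsSparse, mem_insert, not_or]
  grind

lemma isSparse_union {S T : Finset ℕ} (h : ∀ s ∈ S, ∀ t ∈ T, s + 1 < t) :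
    IsSparse (S ∪ T) ↔ IsSparse S ∧ IsSparse T := by
  simp only [IsSparse, mem_union, or_imp, forall_and, not_or]
  grind

open Classical in
/-- The number of sparse `k`-element subsets of `V`. -/
noncomputable def numSparse (V : Finset ℕ) (k : ℕ) : ℕ := #{S ∈ V.powersetCard k | IsSparse S}

lemma numSparse_zero (V : Finset ℕ) : numSparse V 0 = 1 := by
  simp [numSparse, IsSparse, filter_singleton]

lemma numSparse_empty_succ (k : ℕ) : numSparse ∅ (k + 1) = 0 := by
  simp [numSparse]

lemma numSparse_insert_succ {V : Finset ℕ} {x : ℕ} (hx : x ∉ V) (hx' : x + 1 ∉ V) (k : ℕ) :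
    numSparse (insert x V) (k + 1) =
      numSparse V (k + 1) + numSparse {v ∈ V | v + 1 ≠ x} k := by
  classical
  have hinj : Set.InjOn (insert x) (V.powersetCard k : Set (Finset ℕ)) := by
    intro S hS T hT hST
    rw [mem_coe, mem_powersetCard] at hS hT
    rw [← erase_insert fun h => hx (hS.1 h), hST, erase_insert fun h => hx (hT.1 h)]
  unfold numSparse
  rw [powersetCard_succ_insert hx, filter_union, card_union_of_disjoint, filter_image,
    card_image_of_injOn (hinj.mono (coe_subset.2 (filter_subset _ _)))]
  · congr 2
    ext S
    simp only [mem_filter, mem_powersetCard, subset_iff]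
    constructor
    · rintro ⟨⟨hS, hk⟩, hsp⟩
      rw [isSparse_insert fun h => hx' (hS h)] at hsp
      exact ⟨⟨fun v hv => ⟨hS hv, hsp.2 v hv⟩, hk⟩, hsp.1⟩
    · rintro ⟨⟨hS, hk⟩, hsp⟩
      exact ⟨⟨fun v hv => (hS hv).1, hk⟩,
        (isSparse_insert fun h => hx' (hS h).1).2 ⟨hsp, fun v hv => (hS hv).2⟩⟩
  · refine disjoint_left.2 fun S hS hS' => ?_
    simp only [mem_filter, mem_powersetCard, mem_image] at hS hS'
    obtain ⟨⟨T, _, rfl⟩, _⟩ := hS'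
    exact hx (hS.1.1 (mem_insert_self x T))

lemma choose_sub_succ (m k : ℕ) :
    (m + 2 - k).choose (k + 1) = (m + 1 - k).choose (k + 1) + (m + 1 - k).choose k := by
  rcases le_or_gt k (m + 1) with h | h
  · rw [Nat.sub_add_comm (n := m + 1) (m := 1) h, Nat.choose_succ_succ', add_comm]
  · rw [Nat.choose_eq_zero_of_lt (by omega), Nat.choose_eq_zero_of_lt (by omega),
      Nat.choose_eq_zero_of_lt (by omega)]

lemma numSparse_Ico_add (a m k : ℕ) : numSparse (Ico a (a + m)) k = (m + 1 - k).choose k := by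
  induction m using Nat.twoStepInduction generalizing k with
  | zero =>
    cases k with
    | zero => simp [numSparse_zero]
    | succ k => simp [numSparse_empty_succ, Nat.choose_eq_zero_of_lt]
  | one =>
    rcases k with _ | _ | k
    · simp [numSparse_zero]
    · rw [← insert_Ico_right_eq_Ico_add_one le_rfl, numSparse_insert_succ] <;>
      simp [numSparse_zero, numSparse_empty_succ]
    · rw [← insert_Ico_right_eq_Ico_add_one le_rfl, numSparse_insert_succ] <;>
      simp [numSparse_empty_succ, Nat.choose_eq_zero_of_lt]
  | more m ih ih' =>
    cases k with
    | zero => simp [numSparse_zero]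
    | succ k =>
      have hsplit : Ico a (a + (m + 2)) = insert (a + m + 1) (Ico a (a + (m + 1))) := by
        ext v
        simp only [mem_Ico, mem_insert]
        omega
      have hfilter : {v ∈ Ico a (a + (m + 1)) | v + 1 ≠ a + m + 1} = Ico a (a + m) := by
        ext v
        simp only [mem_Ico, mem_filter]
        omega
      rw [hsplit, numSparse_insert_succ (by simp; omega) (by simp; omega), hfilter, ih, ih',
        show m + 2 + 1 - (k + 1) = m + 2 - k by omega, choose_sub_succ,
        show m + 1 + 1 - (k + 1) = m + 1 - k by omega]

/-- Kaplansky's lemma. Truncated subtraction makes the formula correct for `b < a` as well. -/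
theorem numSparse_Ico (a b k : ℕ) : numSparse (Ico a b) k = (b + 1 - a - k).choose k := by
  rcases lt_or_ge b a with h | h
  · rw [Ico_eq_empty_of_le h.le, Nat.sub_eq_zero_of_le h, Nat.zero_sub]
    cases k with
    | zero => simp [numSparse_zero]
    | succ k => simp [numSparse_empty_succ]
  · obtain ⟨m, rfl⟩ := Nat.exists_eq_add_of_le h
    rw [numSparse_Ico_add, show a + m + 1 - a = m + 1 by omega]

lemma numSparse_union {U W : Finset ℕ} (h : ∀ u ∈ U, ∀ w ∈ W, u + 1 < w) (k : ℕ) :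
    numSparse (U ∪ W) k = ∑ ij ∈ antidiagonal k, numSparse U ij.1 * numSparse W ij.2 := by
  classical
  have hdisj : Disjoint U W := disjoint_left.2 fun u hu hw => by have := h u hu u hw; omega
  simp only [numSparse, ← card_product, ← card_sigma]
  have hsep {S T : Finset ℕ} (hS : S ⊆ U) (hT : T ⊆ W) : ∀ s ∈ S, ∀ t ∈ T, s + 1 < t :=
    fun s hs t ht => h s (hS hs) t (hT ht)
  have hsplit {S : Finset ℕ} (hS : S ⊆ U ∪ W) : S ∩ U ∪ S ∩ W = S := by
    rw [← inter_union_distrib_left, inter_eq_left.2 hS]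
  refine card_nbij' (fun S => ⟨(#(S ∩ U), #(S ∩ W)), (S ∩ U, S ∩ W)⟩) (fun x => x.2.1 ∪ x.2.2)
    ?_ ?_ ?_ ?_
  · intro S hS
    obtain ⟨⟨hSUW, hk⟩, hsp⟩ := by simpa using hS
    rw [← hsplit hSUW, isSparse_union (hsep inter_subset_right inter_subset_right)] at hsp
    rw [← hsplit hSUW, card_union_of_disjoint
      (hdisj.mono inter_subset_right inter_subset_right)] at hk
    simpa using ⟨hk, hsp⟩
  · rintro ⟨⟨i, j⟩, A, B⟩ hAB
    obtain ⟨hk, ⟨⟨hA, hi⟩, hAsp⟩, ⟨hB, hj⟩, hBsp⟩ := by simpa using hAB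
    simp only [coe_filter, mem_powersetCard, Set.mem_ofPred_eq]
    exact ⟨⟨union_subset_union hA hB, by
      rw [card_union_of_disjoint (hdisj.mono hA hB), hi, hj, hk]⟩,
      (isSparse_union (hsep hA hB)).2 ⟨hAsp, hBsp⟩⟩
  · intro S hS
    exact hsplit (mem_powersetCard.1 (mem_filter.1 hS).1).1
  · rintro ⟨⟨i, j⟩, A, B⟩ hAB
    obtain ⟨-, ⟨⟨hA, rfl⟩, -⟩, ⟨hB, rfl⟩, -⟩ := by simpa using hAB
    have hU : (A ∪ B) ∩ U = A := by
      rw [union_inter_distrib_right, inter_eq_left.2 hA,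
        disjoint_iff_inter_eq_empty.1 (hdisj.symm.mono_left hB), union_empty]
    have hW : (A ∪ B) ∩ W = B := by
      rw [union_inter_distrib_right, inter_eq_left.2 hB,
        disjoint_iff_inter_eq_empty.1 (hdisj.mono_left hA), empty_union]
    simp only [hU, hW]

end SparseSets

section PathLabelling

variable {α β : Type*} [Fintype α] [Fintype β] {M : Matrix α β ℤ} {V : Finset ℕ}
  {label : α × β → ℕ}

/-- `label` numbers the cells of the board of `M` by the elements of `V` so that two distinct cells
share a row or a column exactly when their numbers are consecutive. -/
structure IsPathLabelling (M : Matrix α β ℤ) (V : Finset ℕ) (label : α × β → ℕ) : Prop where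
  bijOn : Set.BijOn label (board M) V
  attacks_iff : ∀ p ∈ board M, ∀ q ∈ board M, label p < label q →
    ((p.1 = q.1 ∨ p.2 = q.2) ↔ label p + 1 = label q)

lemma IsPathLabelling.isSparse_image_iff (h : IsPathLabelling M V label) {S : Finset (α × β)}
    (hS : S ⊆ board M) : IsSparse (S.image label) ↔ IsNonattacking S := by
  rw [isNonattacking_iff]
  constructor
  · intro hsp p hp q hq hpq
    have hne : label p ≠ label q := fun he => hpq (h.bijOn.injOn (hS hp) (hS hq) he)
    rw [← not_or]
    intro hpq'
    rcases hne.lt_or_gt with hlt | hlt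
    · have := (h.attacks_iff p (hS hp) q (hS hq) hlt).1 hpq'
      exact hsp _ (mem_image_of_mem label hp) (this ▸ mem_image_of_mem label hq)
    · have := (h.attacks_iff q (hS hq) p (hS hp) hlt).1 (hpq'.imp Eq.symm Eq.symm)
      exact hsp _ (mem_image_of_mem label hq) (this ▸ mem_image_of_mem label hp)
  · intro hna v hv hv'
    obtain ⟨p, hp, rfl⟩ := mem_image.1 hv
    obtain ⟨q, hq, hpq⟩ := mem_image.1 hv'
    have hne : p ≠ q := by rintro rfl; omega
    have := (h.attacks_iff p (hS hp) q (hS hq) (by omega)).2 hpq.symm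
    have := hna p hp q hq hne
    tauto

lemma IsPathLabelling.rookNum_eq [DecidableEq α] [DecidableEq β] (h : IsPathLabelling M V label)
    (k : ℕ) : rookNum M k = numSparse V k := by
  classical
  rw [rookNum_eq_card_filter_board, numSparse]
  have hV : (board M).image label = V := by
    rw [← coe_inj, coe_image, h.bijOn.image_eq]
  refine card_nbij (fun S => S.image label) ?_ ?_ ?_
  · intro S hS
    obtain ⟨⟨hSM, hk⟩, hna⟩ := by simpa using hS
    simp only [coe_filter, mem_powersetCard, Set.mem_ofPred_eq]
    exact ⟨⟨hV ▸ image_subset_image hSM,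
      by rw [card_image_of_injOn (h.bijOn.injOn.mono hSM), hk]⟩, (h.isSparse_image_iff hSM).2 hna⟩
  · intro S hS T hT hST
    obtain ⟨⟨hSM, -⟩, -⟩ := by simpa using hS
    obtain ⟨⟨hTM, -⟩, -⟩ := by simpa using hT
    have hST' : label '' (S : Set (α × β)) = label '' T := by
      simpa using congrArg ((↑) : Finset ℕ → Set ℕ) hST
    exact coe_injective ((h.bijOn.injOn.image_eq_image_iff hSM hTM).1 hST')
  · intro T hT
    obtain ⟨⟨hTV, hk⟩, hsp⟩ := by simpa using hT
    obtain ⟨S, hSM, hS⟩ := subset_image_iff.1 (hV ▸ hTV)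
    subst hS
    rw [card_image_of_injOn (h.bijOn.injOn.mono hSM)] at hk
    rw [h.isSparse_image_iff (by exact_mod_cast hSM)] at hsp
    exact ⟨S, by simpa using ⟨⟨hSM, hk⟩, hsp⟩, rfl⟩

end PathLabelling

section MenageBoard

lemma mod_eq_ite_of_le {n x : ℕ} (hx : x ≤ n) : x % n = if x = n then 0 else x := by
  split_ifs with h
  · rw [h, Nat.mod_self]
  · exact Nat.mod_eq_of_lt (by omega)

lemma val_skipIdx {n : ℕ} (a : ℕ) (i : Fin (n - 1)) :
    (skipIdx a i : Fin n).1 = if i.1 < a then i.1 else i.1 + 1 := by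
  unfold skipIdx
  split_ifs <;> rfl

lemma val_skipIdx_ne {n : ℕ} (a : ℕ) (i : Fin (n - 1)) : (skipIdx a i : Fin n).1 ≠ a := by
  rw [val_skipIdx]
  split_ifs <;> omega

lemma skipIdx_inj {n a : ℕ} {i j : Fin (n - 1)} :
    (skipIdx a i : Fin n) = skipIdx a j ↔ i = j := by
  simp only [Fin.ext_iff, val_skipIdx]
  split_ifs <;> omega

lemma exists_skipIdx_eq {n a : ℕ} (ha : a < n) {j : Fin n} (hj : j.1 ≠ a) :
    ∃ i, skipIdx a i = j := by
  rcases hj.lt_or_gt with h | h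
  · exact ⟨⟨j.1, by omega⟩, by simp [Fin.ext_iff, val_skipIdx, h]⟩
  · exact ⟨⟨j.1 - 1, by omega⟩, by
      rw [Fin.ext_iff, val_skipIdx, if_neg (by simp; omega)]; simp; omega⟩

lemma delRC_Jmat_sub_one_sub_Pmat (n a b : ℕ) :
    delRC (Jmat n - 1 - Pmat n) a b = Matrix.of (fun _ _ => 1) - delRC (1 + Pmat n) a b := by
  ext i j
  simp [delRC, Jmat, sub_sub]

lemma one_add_Pmat_apply {n : ℕ} (hn : 2 ≤ n) (i j : Fin n) :
    (1 + Pmat n) i j = if j = i ∨ j.1 = (i.1 + 1) % n then 1 else 0 := by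
  have hi : i.1 ≠ (i.1 + 1) % n := by
    rw [mod_eq_ite_of_le i.isLt]
    split_ifs <;> omega
  simp only [Matrix.add_apply, Matrix.one_apply, Pmat, Matrix.of_apply]
  grind

/-- The position of the cell `(i, j)` on the cycle `(0,0), (0,1), (1,1), (1,2), …, (n-1,0)` of
cells of `I + P`, in which consecutive cells share a row or a column. Off `I + P` the value is
irrelevant. -/
def cycleLabel {n : ℕ} (i j : Fin n) : ℕ := if j = i then 2 * i else 2 * i + 1

lemma cycleLabel_div_two {n : ℕ} (i j : Fin n) : cycleLabel i j / 2 = i := by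
  unfold cycleLabel
  split_ifs <;> omega

lemma one_add_Pmat_apply_eq_one_iff {n : ℕ} (hn : 2 ≤ n) {i j : Fin n} :
    (1 + Pmat n) i j = 1 ↔ (cycleLabel i j + 1) / 2 % n = j := by
  rw [one_add_Pmat_apply hn]
  by_cases hij : j = i
  · simp [cycleLabel, hij, show (2 * i.1 + 1) / 2 = i by omega, Nat.mod_eq_of_lt i.isLt]
  · simp [cycleLabel, hij, show (2 * i.1 + 1 + 1) / 2 = i + 1 by omega, eq_comm]

lemma exists_cycleLabel_eq {n v : ℕ} (hn : 2 ≤ n) (hv : v < 2 * n) :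
    ∃ i j : Fin n, cycleLabel i j = v ∧ i.1 = v / 2 ∧ j.1 = (v + 1) / 2 % n := by
  refine ⟨⟨v / 2, by omega⟩, ⟨(v + 1) / 2 % n, Nat.mod_lt _ (by omega)⟩, ?_, rfl, rfl⟩
  simp only [cycleLabel, Fin.mk.injEq]
  rw [mod_eq_ite_of_le (by omega)]
  split_ifs <;> omega

/-- The numbering of the cells of `I + P` by `cycleLabel`, carried over to the matrix with row `0`
and column `c` deleted. -/
def delLabel (n c : ℕ) (p : Fin (n - 1) × Fin (n - 1)) : ℕ :=
  cycleLabel (n := n) (skipIdx 0 p.1) (skipIdx c p.2)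

lemma delLabel_div_two (n c : ℕ) (p : Fin (n - 1) × Fin (n - 1)) :
    delLabel n c p / 2 = p.1 + 1 := by
  simp [delLabel, cycleLabel_div_two, val_skipIdx]

lemma mem_board_delRC_iff {n c : ℕ} (hn : 2 ≤ n) {p : Fin (n - 1) × Fin (n - 1)} :
    p ∈ board (delRC (1 + Pmat n) 0 c) ↔
      (delLabel n c p + 1) / 2 % n = (skipIdx c p.2 : Fin n) := by
  rw [mem_board, delLabel, ← one_add_Pmat_apply_eq_one_iff hn]
  rfl

lemma delLabel_bijOn {n c : ℕ} (hc : 0 < c) (hcn : c < n) :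
    Set.BijOn (delLabel n c) (board (delRC (1 + Pmat n) 0 c))
      (Ico 2 (2 * c - 1) ∪ Ico (2 * c + 1) (2 * n) : Finset ℕ) := by
  refine ⟨fun p hp => ?_, fun p hp q hq hpq => ?_, fun v hv => ?_⟩
  · have hrow := delLabel_div_two n c p
    have hcol := (mem_board_delRC_iff (by omega)).1 hp
    have hne := val_skipIdx_ne (n := n) c p.2
    rw [mod_eq_ite_of_le (by omega)] at hcol
    simp only [mem_coe, mem_union, mem_Ico]
    split_ifs at hcol <;> omega
  · have hcolp := (mem_board_delRC_iff (by omega)).1 hp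
    have hcolq := (mem_board_delRC_iff (by omega)).1 hq
    have hrowp := delLabel_div_two n c p
    have hrowq := delLabel_div_two n c q
    rw [hpq] at hcolp hrowp
    exact Prod.ext (Fin.ext (by omega)) (skipIdx_inj.1 (Fin.ext (hcolp.symm.trans hcolq)))
  · simp only [mem_coe, mem_union, mem_Ico] at hv
    obtain ⟨i, j, hij, hi, hj⟩ := exists_cycleLabel_eq (n := n) (v := v) (by omega) (by omega)
    obtain ⟨x, hx⟩ := exists_skipIdx_eq (a := 0) (by omega) (show i.1 ≠ 0 by omega)
    obtain ⟨y, hy⟩ := exists_skipIdx_eq (a := c) hcn (show j.1 ≠ c by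
      rw [hj, mod_eq_ite_of_le (by omega)]
      split_ifs <;> omega)
    have hv' : delLabel n c (x, y) = v := by rw [delLabel, hx, hy, hij]
    exact ⟨(x, y), (mem_board_delRC_iff (by omega)).2 (by rw [hv', hy, hj]), hv'⟩

lemma isPathLabelling_delLabel {n c : ℕ} (hc : 0 < c) (hcn : c < n) :
    IsPathLabelling (delRC (1 + Pmat n) 0 c) (Ico 2 (2 * c - 1) ∪ Ico (2 * c + 1) (2 * n))
      (delLabel n c) := by
  refine ⟨delLabel_bijOn hc hcn, fun p hp q hq hpq => ?_⟩
  have hrowp := delLabel_div_two n c p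
  have hrowq := delLabel_div_two n c q
  have hrow : p.1 = q.1 ↔ delLabel n c p / 2 = delLabel n c q / 2 := by
    rw [Fin.ext_iff]
    omega
  have hcol : p.2 = q.2 ↔ (delLabel n c p + 1) / 2 = (delLabel n c q + 1) / 2 := by
    rw [← skipIdx_inj (a := c), Fin.ext_iff, ← (mem_board_delRC_iff (by omega)).1 hp,
      ← (mem_board_delRC_iff (by omega)).1 hq, mod_eq_ite_of_le (by omega),
      mod_eq_ite_of_le (by omega)]
    split_ifs <;> omega
  rw [hrow, hcol]
  omega

lemma rookNum_delRC_one_add_Pmat {n c : ℕ} (hc : 0 < c) (hcn : c < n) (k : ℕ) :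
    rookNum (delRC (1 + Pmat n) 0 c) k =
      ∑ ij ∈ antidiagonal k,
        (2 * c - 2 - ij.1).choose ij.1 * (2 * (n - c) - ij.2).choose ij.2 := by
  rw [(isPathLabelling_delLabel hc hcn).rookNum_eq, numSparse_union (by simp; omega)]
  refine sum_congr rfl fun ij _ => ?_
  rw [numSparse_Ico, numSparse_Ico, show 2 * c - 1 + 1 - 2 = 2 * c - 2 by omega,
    show 2 * n + 1 - (2 * c + 1) = 2 * (n - c) by omega]

end MenageBoard

section BinomialSum

lemma intChoose_natCast (a b : ℕ) : intChoose a b = a.choose b := by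
  unfold intChoose
  split_ifs with h
  · simp
  · rw [Nat.choose_eq_zero_of_lt (by omega), Nat.cast_zero]

/-- The range of `i` discards only vanishing terms of the convolution. -/
lemma sum_antidiagonal_choose_eq_sum_intChoose {n r : ℕ} (hr : 2 ≤ r) (hrn : r ≤ n) (k : ℕ) :
    ((∑ ij ∈ antidiagonal k, (2 * (r - 1) - 2 - ij.1).choose ij.1 *
        (2 * (n - (r - 1)) - ij.2).choose ij.2 : ℕ) : ℤ) =
      ∑ i ∈ Icc (r + k - n - 1) (min k (r - 2)),
        intChoose (2 * (r : ℤ) - i - 4) i *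
          intChoose (2 * ((n : ℤ) - r) - k + i + 2) ((k : ℤ) - i) := by
  rw [Nat.sum_antidiagonal_eq_sum_range_succ
    (fun i j => (2 * (r - 1) - 2 - i).choose i * (2 * (n - (r - 1)) - j).choose j), Nat.cast_sum]
  symm
  refine sum_subset_zero_on_sdiff (fun i hi => ?_) (fun i hi => ?_) fun i hi => ?_
  · simp only [mem_Icc, mem_range] at hi ⊢
    omega
  · rw [mem_sdiff, mem_range, mem_Icc] at hi
    rw [Nat.cast_eq_zero, mul_eq_zero, Nat.choose_eq_zero_iff, Nat.choose_eq_zero_iff]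
    omega
  · rw [mem_Icc] at hi
    rw [show 2 * (r : ℤ) - i - 4 = (2 * (r - 1) - 2 - i : ℕ) by omega,
      show 2 * ((n : ℤ) - r) - k + i + 2 = (2 * (n - (r - 1)) - (k - i) : ℕ) by omega,
      show (k : ℤ) - i = (k - i : ℕ) by omega, intChoose_natCast, intChoose_natCast,
      Nat.cast_mul]

end BinomialSum

theorem seated_menage_formula_general (n r : ℕ) (hr : 2 ≤ r) (hrn : r ≤ n) :
    (delRC (Jmat n - 1 - Pmat n) 0 (r - 1)).permanent =
      ∑ k ∈ Finset.range n,
        (-1 : ℤ) ^ k * (Nat.factorial (n - k - 1) : ℤ) *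
          ∑ i ∈ Finset.Icc (r + k - n - 1) (min k (r - 2)),
            intChoose (2 * (r : ℤ) - (i : ℤ) - 4) (i : ℤ) *
              intChoose (2 * ((n : ℤ) - (r : ℤ)) - (k : ℤ) + (i : ℤ) + 2)
                ((k : ℤ) - (i : ℤ)) := by
  have hboard (i j : Fin (n - 1)) :
      delRC (1 + Pmat n) 0 (r - 1) i j = 0 ∨ delRC (1 + Pmat n) 0 (r - 1) i j = 1 := by
    rw [delRC, Matrix.of_apply, one_add_Pmat_apply (by omega)]
    exact (ite_eq_or_eq _ _ _).symm
  rw [delRC_Jmat_sub_one_sub_Pmat, permanent_ones_sub_eq_sum_rookNum hboard, Fintype.card_fin,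
    Nat.sub_add_cancel (by omega)]
  refine sum_congr rfl fun k _ => ?_
  rw [Nat.sub_right_comm, rookNum_delRC_one_add_Pmat (by omega) (by omega),
    sum_antidiagonal_choose_eq_sum_intChoose hr hrn]

/-- **Solution of the seated-husband ménage problem (circular table).**  For `3 ≤ r ≤ n`,
`per((J_n - I - P)[1|r]) = ∑_{k=0}^{n-1} (-1)^k (n-k-1)!
  ∑_{i=max(r+k-n-1,0)}^{min(k,r-2)} C(2r-i-4, i) · C(2(n-r)-k+i+2, k-i)`
(with `C(a,b) = 0` unless `0 ≤ b ≤ a`). -/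
theorem seated_menage_formula (n r : ℕ) (hn : 3 ≤ n) (hr : 3 ≤ r) (hrn : r ≤ n) :
    (delRC (Jmat n - 1 - Pmat n) 0 (r - 1)).permanent =
      ∑ k ∈ Finset.range n,
        (-1 : ℤ) ^ k * (Nat.factorial (n - k - 1) : ℤ) *
          ∑ i ∈ Finset.Icc (r + k - n - 1) (min k (r - 2)),
            intChoose (2 * (r : ℤ) - (i : ℤ) - 4) (i : ℤ) *
              intChoose (2 * ((n : ℤ) - (r : ℤ)) - (k : ℤ) + (i : ℤ) + 2)
                ((k : ℤ) - (i : ℤ)) := by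
  exact seated_menage_formula_general n r (by omega) hrn
end

section
/- Let n ≥ 3 be an integer and suppose that per((J_n − I − P)[1|r]) takes the same value for all r with 3 ≤ r ≤ n. Then (n−2) · Σ_{k=0}^{n−3} (−1)^k · C(2n−k−4, k) · (n−k−2)! · (n−k−2) = per(J_n − I − P). -/
open Finset

/-!
Cells `(i, i)` and `(i, i + 1)` form a path in the graph whose vertices are the rows and columns,
taken in the order `c₀, r₀, c₁, r₁, …`. Zeroing in `J` the cells of the path on `N + 2` lines
instead of `N + 1` lowers the permanent by a minor that is again of this form, with `N` lines; this
is Pascal's recursion for the numbers `C(N - k, k)` of `k`-matchings of a path on `N` vertices, so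
the permanent is `∑ (-1)ᵏ C(N - k, k) (m - k)!`.

The minor of `J_n - I - P` at its top right corner has, after a rotation of its columns, zeros
along such a path with `2n - 4` lines and at one further isolated cell, so its permanent is the
difference of two path permanents. Under the hypothesis the `n - 2` minors with nonzero coefficient
in the Laplace expansion along the first row all equal this one.
-/

section Laplace

variable {R : Type*} {m : ℕ}

theorem permanent_succ_column_zero [CommSemiring R] (A : Matrix (Fin (m + 1)) (Fin (m + 1)) R) :
    A.permanent = ∑ i, A i 0 * (A.submatrix i.succAbove Fin.succ).permanent := by
  rw [Matrix.permanent, univ_perm_fin_succ, ← univ_product_univ]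
  simp only [sum_map, Equiv.toEmbedding_apply, sum_product]
  refine sum_congr rfl fun i _ => ?_
  simp only [Fin.prod_univ_succ, Equiv.Perm.decomposeFin_symm_apply_zero,
    Equiv.Perm.decomposeFin_symm_apply_succ, ← mul_sum]
  congr 1
  induction i using Fin.cases with
  | zero => simp [Matrix.permanent]
  | succ k =>
    rw [← Matrix.permanent_permute_cols k.cycleRange, Matrix.permanent]
    simp [Fin.succAbove_cycleRange]

theorem permanent_succ_row_zero [CommSemiring R] (A : Matrix (Fin (m + 1)) (Fin (m + 1)) R) :
    A.permanent = ∑ j, A 0 j * (A.submatrix Fin.succ j.succAbove).permanent := by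
  rw [← Matrix.permanent_transpose, permanent_succ_column_zero]
  refine sum_congr rfl fun j _ => ?_
  rw [← Matrix.permanent_transpose (A.submatrix _ _), Matrix.transpose_submatrix,
    Matrix.transpose_apply]

theorem permanent_succ_row [CommSemiring R] (A : Matrix (Fin (m + 1)) (Fin (m + 1)) R)
    (i : Fin (m + 1)) :
    A.permanent = ∑ j, A i j * (A.submatrix i.succAbove j.succAbove).permanent := by
  have cycleRange_symm_comp_succ : i.cycleRange.symm ∘ Fin.succ = i.succAbove :=
    funext (Fin.cycleRange_symm_succ i)
  rw [← Matrix.permanent_permute_cols i.cycleRange.symm, permanent_succ_row_zero]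
  simp only [Matrix.submatrix_apply, Fin.cycleRange_symm_zero, id_eq, Matrix.submatrix_submatrix,
    cycleRange_symm_comp_succ, Function.id_comp]

theorem permanent_eq_add_of_eq_off_entry [CommRing R] {A B : Matrix (Fin (m + 1)) (Fin (m + 1)) R}
    (a b : Fin (m + 1)) (h : ∀ i j, ¬(i = a ∧ j = b) → A i j = B i j) :
    A.permanent =
      B.permanent + (A a b - B a b) * (B.submatrix a.succAbove b.succAbove).permanent := by
  have minors_eq (j : Fin (m + 1)) :
      A.submatrix a.succAbove j.succAbove = B.submatrix a.succAbove j.succAbove := by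
    ext x y
    exact h _ _ fun hab => Fin.succAbove_ne a x hab.1
  have sum_erase_eq :
      ∑ j ∈ univ.erase b, A a j * (B.submatrix a.succAbove j.succAbove).permanent =
        ∑ j ∈ univ.erase b, B a j * (B.submatrix a.succAbove j.succAbove).permanent :=
    sum_congr rfl fun j hj => by rw [h a j fun hab => ne_of_mem_erase hj hab.2]
  rw [permanent_succ_row A a, permanent_succ_row B a, ← add_sum_erase _ _ (mem_univ b),
    ← add_sum_erase _ (fun j => B a j * _) (mem_univ b)]
  simp only [minors_eq, sum_erase_eq]
  ring

end Laplace

section Staircase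

/-- The all-ones matrix with zeros on the cells of the staircase path `(0, 0), (0, 1), (1, 1), …`
joining consecutive lines among the first `N` in the order column 0, row 0, column 1, row 1, …;
these are the first `N - 1` cells of the staircase. Counting lines rather than cells makes the
two-step recursion `permanent_staircase_succ` uniform in `N`. -/
def staircase (R : Type*) [Zero R] [One R] (m N : ℕ) : Matrix (Fin m) (Fin m) R :=
  Matrix.of fun i j => if (j.1 = i.1 ∨ j.1 = i.1 + 1) ∧ i.1 + j.1 + 1 < N then 0 else 1

/-- The inclusion–exclusion count of the permutations of `Fin m` that avoid the staircase path on
the first `N ≤ 2 * m` lines; `C(N - k, k)` is the number of `k`-matchings of that path. -/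
def staircaseHitSum (m N : ℕ) : ℤ :=
  ∑ k ∈ range (m + 1), (-1) ^ k * ((N - k).choose k : ℤ) * ((m - k).factorial : ℤ)

theorem coe_succAbove_eq_ite {m : ℕ} (a : Fin (m + 1)) (i : Fin m) :
    (a.succAbove i : ℕ) = if i.1 < a.1 then i.1 else i.1 + 1 := by
  simp only [Fin.succAbove, Fin.lt_def, Fin.val_castSucc]
  split_ifs <;> rfl

theorem permanent_staircase_succ (R : Type*) [CommRing R] {m N : ℕ} (hN : N ≤ 2 * m) :
    (staircase R (m + 1) (N + 2)).permanent =
      (staircase R (m + 1) (N + 1)).permanent - (staircase R m N).permanent := by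
  let a : Fin (m + 1) := ⟨N / 2, by omega⟩
  let b : Fin (m + 1) := ⟨(N + 1) / 2, by omega⟩
  have new_cell : staircase R (m + 1) (N + 2) a b = 0 := if_pos (by dsimp only [a, b]; omega)
  have old_cell : staircase R (m + 1) (N + 1) a b = 1 := if_neg (by dsimp only [a, b]; omega)
  have minor_eq : (staircase R (m + 1) (N + 1)).submatrix a.succAbove b.succAbove =
      staircase R m N := by
    ext i j
    simp only [staircase, Matrix.submatrix_apply, Matrix.of_apply, coe_succAbove_eq_ite, a, b]
    refine if_congr ?_ rfl rfl
    split_ifs <;> omega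
  rw [permanent_eq_add_of_eq_off_entry (B := staircase R (m + 1) (N + 1)) a b, new_cell,
    old_cell, minor_eq]
  · ring
  · intro i j hij
    simp only [Fin.ext_iff, a, b] at hij
    exact if_congr (by omega) rfl rfl

theorem permanent_staircase_of_le_one (R : Type*) [CommSemiring R] (m : ℕ) {N : ℕ} (hN : N ≤ 1) :
    (staircase R m N).permanent = m.factorial := by
  have entries_eq_one (i j : Fin m) : staircase R m N i j = 1 := if_neg (by omega)
  simp [Matrix.permanent, entries_eq_one, Fintype.card_perm]

theorem choose_pathMatching_succ (N k : ℕ) :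
    (N + 2 - (k + 1)).choose (k + 1) = (N + 1 - (k + 1)).choose (k + 1) + (N - k).choose k := by
  rw [Nat.add_sub_add_right, show N + 2 - (k + 1) = N + 1 - k by omega]
  obtain hk | hk := le_or_gt k N
  · rw [Nat.succ_sub hk, Nat.choose_succ_succ, add_comm]
  · simp only [Nat.choose_eq_zero_of_lt, show N + 1 - k < k + 1 by omega,
      show N - k < k + 1 by omega, show N - k < k by omega]

theorem staircaseHitSum_succ (m N : ℕ) :
    staircaseHitSum (m + 1) (N + 2) = staircaseHitSum (m + 1) (N + 1) - staircaseHitSum m N := by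
  simp only [staircaseHitSum, sum_range_succ' _ (m + 1), choose_pathMatching_succ,
    Nat.add_sub_add_right]
  rw [add_sub_right_comm, ← sum_sub_distrib]
  congr 1
  refine sum_congr rfl fun k _ => ?_
  push_cast
  ring

theorem staircaseHitSum_of_le_one (m : ℕ) {N : ℕ} (hN : N ≤ 1) :
    staircaseHitSum m N = m.factorial := by
  rw [staircaseHitSum, sum_eq_single_of_mem 0 (by simp)]
  · simp
  · intro k _ hk
    rw [Nat.choose_eq_zero_of_lt (by omega)]
    simp

theorem staircaseHitSum_succ_sub {m N : ℕ} (hN : N ≤ 2 * m + 1) :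
    staircaseHitSum (m + 1) N - staircaseHitSum m N =
      ∑ k ∈ range m, (-1) ^ k * ((N - k).choose k : ℤ) * ((m - k).factorial : ℤ) *
        ((m - k : ℕ) : ℤ) := by
  have top_term : (N - (m + 1)).choose (m + 1) = 0 := Nat.choose_eq_zero_of_lt (by omega)
  have difference_term (k : ℕ) (hk : k ∈ range (m + 1)) :
      ((m + 1 - k).factorial : ℤ) - (m - k).factorial = (m - k).factorial * (m - k : ℕ) := by
    rw [Nat.succ_sub (mem_range_succ_iff.mp hk), Nat.factorial_succ]
    push_cast
    ring
  calc staircaseHitSum (m + 1) N - staircaseHitSum m N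
      = ∑ k ∈ range (m + 1), (-1) ^ k * ((N - k).choose k : ℤ) *
          (((m + 1 - k).factorial : ℤ) - (m - k).factorial) := by
        simp only [staircaseHitSum, sum_range_succ _ (m + 1), top_term, mul_sub, sum_sub_distrib]
        simp
    _ = ∑ k ∈ range (m + 1), (-1) ^ k * ((N - k).choose k : ℤ) *
          ((m - k).factorial * (m - k : ℕ)) :=
        sum_congr rfl fun k hk => by rw [difference_term k hk]
    _ = _ := by simp [sum_range_succ, mul_assoc]

theorem permanent_staircase (R : Type*) [CommRing R] : ∀ {m N : ℕ}, N ≤ 2 * m →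
    (staircase R m N).permanent = staircaseHitSum m N
  | m, 0, _ => by
    rw [permanent_staircase_of_le_one R m zero_le_one, staircaseHitSum_of_le_one m zero_le_one,
      Int.cast_natCast]
  | m, 1, _ => by
    rw [permanent_staircase_of_le_one R m le_rfl, staircaseHitSum_of_le_one m le_rfl,
      Int.cast_natCast]
  | m + 1, N + 2, hN => by
    rw [permanent_staircase_succ R (by omega), staircaseHitSum_succ, Int.cast_sub,
      permanent_staircase R (by omega), permanent_staircase R (by omega)]

end Staircase

section Minors

theorem skipIdx_eq_succAbove {m : ℕ} (a : Fin (m + 1)) (i : Fin m) :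
    skipIdx (m := m + 1) a i = a.succAbove i := by
  ext
  rw [coe_succAbove_eq_ite, skipIdx]
  split_ifs <;> rfl

theorem delRC_eq_submatrix {m : ℕ} (M : Matrix (Fin (m + 1)) (Fin (m + 1)) ℤ)
    (a b : Fin (m + 1)) : delRC M a b = M.submatrix a.succAbove b.succAbove := by
  ext i j
  exact congrArg₂ M (skipIdx_eq_succAbove a i) (skipIdx_eq_succAbove b j)

theorem permanent_eq_sum_delRC_row {m : ℕ} (M : Matrix (Fin (m + 1)) (Fin (m + 1)) ℤ)
    (a : Fin (m + 1)) : M.permanent = ∑ j : Fin (m + 1), M a j * (delRC M a j).permanent := by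
  simp only [delRC_eq_submatrix]
  exact permanent_succ_row M a

theorem Jmat_sub_one_sub_Pmat_apply {m : ℕ} (hm : 2 ≤ m) (i j : Fin m) :
    (Jmat m - 1 - Pmat m) i j =
      if j.1 = i.1 ∨ j.1 = i.1 + 1 ∨ (i.1 + 1 = m ∧ j.1 = 0) then 0 else 1 := by
  simp only [Jmat, Pmat, Matrix.sub_apply, Matrix.of_apply, Matrix.one_apply, Fin.ext_iff]
  obtain hi | hi : i.1 + 1 < m ∨ i.1 + 1 = m := by omega
  · rw [Nat.mod_eq_of_lt hi]
    split_ifs <;> omega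
  · rw [hi, Nat.mod_self]
    split_ifs <;> omega

theorem permanent_Jmat_sub_one_sub_Pmat_eq_sum_minors (m : ℕ) :
    (Jmat (m + 2) - 1 - Pmat (m + 2)).permanent =
      ∑ j : Fin m, (delRC (Jmat (m + 2) - 1 - Pmat (m + 2)) 0 (j + 2)).permanent := by
  rw [permanent_eq_sum_delRC_row _ 0, Fin.sum_univ_succ, Fin.sum_univ_succ]
  simp [Jmat_sub_one_sub_Pmat_apply, -Matrix.sub_apply]

theorem delRC_zero_last {m : ℕ} (M : Matrix (Fin (m + 1)) (Fin (m + 1)) ℤ) :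
    delRC M 0 m = M.submatrix Fin.succ Fin.castSucc := by
  simpa using delRC_eq_submatrix M 0 (Fin.last m)

theorem Jmat_sub_one_sub_Pmat_succ_finRotate {m : ℕ} (i j : Fin (m + 1)) :
    (Jmat (m + 2) - 1 - Pmat (m + 2)) i.succ (finRotate (m + 1) j).castSucc =
      if i = Fin.last m ∧ j = Fin.last m then 0 else staircase ℤ (m + 1) (2 * m) i j := by
  have rotate_val : (finRotate (m + 1) j : ℕ) = if j = Fin.last m then 0 else j.1 + 1 :=
    coe_finRotate j
  simp only [Jmat_sub_one_sub_Pmat_apply (Nat.le_add_left 2 m), Fin.val_succ, Fin.val_castSucc,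
    staircase, Matrix.of_apply]
  simp only [Fin.ext_iff, Fin.val_last] at rotate_val ⊢
  split_ifs at rotate_val ⊢ <;> omega

theorem permanent_cornerMinor_eq_sub (m : ℕ) :
    ((Jmat (m + 2) - 1 - Pmat (m + 2)).submatrix Fin.succ Fin.castSucc).permanent =
      (staircase ℤ (m + 1) (2 * m)).permanent - (staircase ℤ m (2 * m)).permanent := by
  have corner_cell : staircase ℤ (m + 1) (2 * m) (Fin.last m) (Fin.last m) = 1 :=
    if_neg (by simp only [Fin.val_last]; omega)
  have minor_eq : (staircase ℤ (m + 1) (2 * m)).submatrix (Fin.last m).succAbove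
      (Fin.last m).succAbove = staircase ℤ m (2 * m) := by
    rw [Fin.succAbove_last]
    rfl
  rw [← Matrix.permanent_permute_rows (finRotate (m + 1)), Matrix.submatrix_submatrix,
    permanent_eq_add_of_eq_off_entry (B := staircase ℤ (m + 1) (2 * m)) (Fin.last m) (Fin.last m),
    minor_eq, corner_cell, Matrix.submatrix_apply, Function.comp_id, Function.comp_apply,
    Jmat_sub_one_sub_Pmat_succ_finRotate, if_pos ⟨rfl, rfl⟩]
  · ring
  · intro i j hij
    exact (Jmat_sub_one_sub_Pmat_succ_finRotate i j).trans (if_neg hij)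

theorem permanent_cornerMinor (m : ℕ) :
    (delRC (Jmat (m + 2) - 1 - Pmat (m + 2)) 0 (m + 1)).permanent =
      ∑ k ∈ range m, (-1) ^ k * ((2 * m - k).choose k : ℤ) * ((m - k).factorial : ℤ) *
        ((m - k : ℕ) : ℤ) := by
  rw [delRC_zero_last, permanent_cornerMinor_eq_sub, permanent_staircase ℤ (by omega),
    permanent_staircase ℤ le_rfl, Int.cast_id, Int.cast_id, staircaseHitSum_succ_sub (by omega)]

end Minors

/-- **Necessary condition (Lemma 6).**  If `per((J_n - I - P)[1|r])` takes the same value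
for all `3 ≤ r ≤ n`, then
`(n-2) · ∑_{k=0}^{n-3} (-1)^k · C(2n-k-4, k) · (n-k-2)! · (n-k-2) = per(J_n - I - P)`. -/
theorem necessary_condition (n : ℕ) (hn : 3 ≤ n)
    (h : ∀ r s : ℕ, 3 ≤ r → r ≤ n → 3 ≤ s → s ≤ n →
      (delRC (Jmat n - 1 - Pmat n) 0 (r - 1)).permanent =
        (delRC (Jmat n - 1 - Pmat n) 0 (s - 1)).permanent) :
    ((n : ℤ) - 2) *
        ∑ k ∈ Finset.range (n - 2),
          (-1 : ℤ) ^ k * (Nat.choose (2 * n - k - 4) k : ℤ) *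
            (Nat.factorial (n - k - 2) : ℤ) * ((n - k - 2 : ℕ) : ℤ) =
      (Jmat n - 1 - Pmat n).permanent := by
  obtain ⟨m, rfl⟩ : ∃ m, n = m + 2 := ⟨n - 2, by omega⟩
  have minors_eq (j : Fin m) :
      (delRC (Jmat (m + 2) - 1 - Pmat (m + 2)) 0 (j + 2)).permanent =
        (delRC (Jmat (m + 2) - 1 - Pmat (m + 2)) 0 (m + 1)).permanent :=
    h (j + 3) (m + 2) (by omega) (by omega) hn le_rfl
  rw [permanent_Jmat_sub_one_sub_Pmat_eq_sum_minors, sum_congr rfl fun j _ => minors_eq j,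
    permanent_cornerMinor, sum_const, card_univ, Fintype.card_fin, nsmul_eq_mul]
  have binomial_index (k : ℕ) : 2 * (m + 2) - k - 4 = 2 * m - k := by omega
  have factorial_index (k : ℕ) : m + 2 - k - 2 = m - k := by omega
  simp only [binomial_index, factorial_index, Nat.add_sub_cancel]
  push_cast
  ring
end
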